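/- arXiv:1607.02621 — 2 statements merged into one kernel-verified Lean document; each statement's English description precedes it below -/
import Mathlib

section
/- There exists a constant C > 0 such that the following holds. Let u : ℝ³ → ℝ be a smooth function which is ℤ³-periodic (u(x + a) = u(x) for all a ∈ ℤ³), satisfies sup u = 0, and satisfies the differential inequality Δu(x) + ∂_t u(x) ≥ −2 for every x ∈ ℝ³, where Δu = ∂²u/∂x² + ∂²u/∂y² + ∂²u/∂t² is the flat Laplacian in the coordinates (x, y, t) of ℝ³. Then ∫_{[0,1]³} |u| ≤ C. -/
/-!
Average `u` against the Gaussian `exp (-‖z‖² / 2)`, at scale `r` and with the centre transported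
along the drift `v` to `x + (r² / 2) • v`. Gaussian integration by parts turns the `r`-derivative of
this average into `r` times the average of `Δu + Du · v`, so a lower bound on `Δu + Du · v` keeps
the average at scale `1` from falling far below `u x`. Periodicity places a zero maximum of `u` in a
bounded fundamental domain; starting from it, the average at scale `1` is bounded below, and as
`u ≤ 0` and the Gaussian is bounded below on bounded sets, the average dominates the `L¹` norm.
-/

open MeasureTheory

/-- The partial derivative of `w : ℝ³ → ℝ` in the `i`-th coordinate direction. -/
noncomputable def pd (i : Fin 3) (w : EuclideanSpace ℝ (Fin 3) → ℝ) :
    EuclideanSpace ℝ (Fin 3) → ℝ :=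
  fun x => fderiv ℝ w x (EuclideanSpace.single i (1 : ℝ))

open Function Module Metric
open scoped InnerProductSpace Laplacian

section Periodic

theorem periodic_of_mem_span_int {A X : Type*} [AddCommGroup A] {f : A → X} {s : Set A}
    (hf : ∀ c ∈ s, Periodic f c) {a : A} (ha : a ∈ Submodule.span ℤ s) : Periodic f a := by
  induction ha using Submodule.span_induction with
  | mem c hc => exact hf c hc
  | zero => exact periodic_with_period_zero f
  | add c d _ _ hc hd => exact hc.add_period hd
  | smul n c _ hc => exact hc.zsmul n

variable {ι E : Type*} [NormedAddCommGroup E] [NormedSpace ℝ E]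

theorem periodic_fderiv {F : Type*} [NormedAddCommGroup F] [NormedSpace ℝ F] {f : E → F} {c : E}
    (hf : Periodic f c) : Periodic (fderiv ℝ f) c := fun x => by
  rw [← fderiv_comp_add_right, hf.funext]

variable [Finite ι] {b : Basis ι ℝ E}

theorem exists_mem_fundamentalDomain_eq_of_periodic {X : Type*} {f : E → X}
    (hf : ∀ i, Periodic f (b i)) (x : E) : ∃ y ∈ ZSpan.fundamentalDomain b, f y = f x := by
  have := Fintype.ofFinite ι
  have hfloor : Periodic f (ZSpan.floor b x : E) :=
    periodic_of_mem_span_int (Set.forall_mem_range.mpr hf) (ZSpan.floor b x).2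
  exact ⟨ZSpan.fract b x, ZSpan.fract_mem_fundamentalDomain b x, hfloor.sub_eq x⟩

variable [FiniteDimensional ℝ E]

theorem isCompact_range_of_periodic {X : Type*} [TopologicalSpace X] {f : E → X}
    (hc : Continuous f) (hf : ∀ i, Periodic f (b i)) : IsCompact (Set.range f) := by
  have himage : f '' closure (ZSpan.fundamentalDomain b) = Set.range f := by
    refine (Set.image_subset_range _ _).antisymm (Set.range_subset_iff.mpr fun x => ?_)
    obtain ⟨y, hy, hyx⟩ := exists_mem_fundamentalDomain_eq_of_periodic hf x
    exact ⟨y, subset_closure hy, hyx⟩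
  have := FiniteDimensional.proper ℝ E
  exact himage ▸ (ZSpan.fundamentalDomain_isBounded b).isCompact_closure.image hc

theorem exists_norm_le_of_periodic {F : Type*} [NormedAddCommGroup F] {f : E → F}
    (hc : Continuous f) (hf : ∀ i, Periodic f (b i)) : ∃ M, ∀ x, ‖f x‖ ≤ M := by
  obtain ⟨M, hM⟩ := (isCompact_range_of_periodic hc hf).isBounded.exists_norm_le
  exact ⟨M, Set.forall_mem_range.mp hM⟩

theorem exists_mem_fundamentalDomain_eq_iSup_of_periodic {f : E → ℝ}
    (hc : Continuous f) (hf : ∀ i, Periodic f (b i)) :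
    ∃ x ∈ ZSpan.fundamentalDomain b, f x = ⨆ y, f y := by
  obtain ⟨y, hy⟩ := (isCompact_range_of_periodic hc hf).sSup_mem (Set.range_nonempty f)
  obtain ⟨x, hx, hxy⟩ := exists_mem_fundamentalDomain_eq_of_periodic hf y
  exact ⟨x, hx, hxy.trans hy⟩

end Periodic

section Affine

variable {𝕜 E F : Type*} [NontriviallyNormedField 𝕜] [NormedAddCommGroup E] [NormedSpace 𝕜 E]
  [NormedAddCommGroup F] [NormedSpace 𝕜 F]

theorem fderiv_comp_add_smul (f : E → F) (c : E) (r : 𝕜) :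
    fderiv 𝕜 (fun z => f (c + r • z)) = fun z => r • fderiv 𝕜 f (c + r • z) := by
  funext z
  rw [fderiv_comp_smul (f := fun y => f (c + y)), fderiv_comp_add_left]

theorem fderiv_fderiv_comp_add_smul (f : E → F) (c : E) (r : 𝕜) (z : E) :
    fderiv 𝕜 (fderiv 𝕜 fun z => f (c + r • z)) z =
      r • r • fderiv 𝕜 (fderiv 𝕜 f) (c + r • z) := by
  have hscale := congrFun (fderiv_const_smul_field (𝕜 := 𝕜)
    (f := fun z => fderiv 𝕜 f (c + r • z)) r) z
  rw [fderiv_comp_add_smul, Pi.smul_apply] at hscale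
  rw [fderiv_comp_add_smul]
  exact hscale

theorem fderiv_fderiv_apply {f : E → F} {x : E} (hf : DifferentiableAt 𝕜 (fderiv 𝕜 f) x)
    (e w : E) : fderiv 𝕜 (fun y => fderiv 𝕜 f y e) x w = fderiv 𝕜 (fderiv 𝕜 f) x w e := by
  rw [fderiv_clm_apply hf (differentiableAt_const e)]
  simp

end Affine

section BoundedC1

variable {E F G : Type*} [NormedAddCommGroup E] [NormedSpace ℝ E] [NormedAddCommGroup F]
  [NormedSpace ℝ F] [NormedAddCommGroup G] [NormedSpace ℝ G]

/-- The class `C¹_b` of continuously differentiable functions which are bounded together with their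
derivative; such functions can be integrated by parts against a Gaussian. The class `C²_b` is
expressed by requiring `BoundedC1` of both `f` and `fderiv ℝ f`. -/
structure BoundedC1 (f : E → F) : Prop where
  contDiff : ContDiff ℝ 1 f
  exists_norm_le : ∃ M, ∀ x, ‖f x‖ ≤ M
  exists_norm_fderiv_le : ∃ M, ∀ x, ‖fderiv ℝ f x‖ ≤ M

namespace BoundedC1

variable {f : E → F}

theorem of_periodic {ι : Type*} [Finite ι] [FiniteDimensional ℝ E] {b : Basis ι ℝ E}
    (hf : ContDiff ℝ 1 f) (hp : ∀ i, Periodic f (b i)) : BoundedC1 f where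
  contDiff := hf
  exists_norm_le := exists_norm_le_of_periodic hf.continuous hp
  exists_norm_fderiv_le := exists_norm_le_of_periodic (hf.continuous_fderiv one_ne_zero)
    fun i => periodic_fderiv (hp i)

theorem differentiable (hf : BoundedC1 f) : Differentiable ℝ f :=
  hf.contDiff.differentiable one_ne_zero

theorem continuous_fderiv (hf : BoundedC1 f) : Continuous (fderiv ℝ f) :=
  hf.contDiff.continuous_fderiv one_ne_zero

theorem comp_add_smul (hf : BoundedC1 f) (c : E) (r : ℝ) :
    BoundedC1 fun z => f (c + r • z) where
  contDiff := hf.contDiff.comp (by fun_prop)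
  exists_norm_le := hf.exists_norm_le.imp fun _ hM _ => hM _
  exists_norm_fderiv_le := by
    obtain ⟨M, hM⟩ := hf.exists_norm_fderiv_le
    refine ⟨‖r‖ * M, fun z => ?_⟩
    rw [fderiv_comp_add_smul, norm_smul]
    exact mul_le_mul_of_nonneg_left (hM _) (norm_nonneg r)

theorem clm_comp (hf : BoundedC1 f) (l : F →L[ℝ] G) : BoundedC1 fun x => l (f x) where
  contDiff := l.contDiff.comp hf.contDiff
  exists_norm_le := by
    obtain ⟨M, hM⟩ := hf.exists_norm_le
    exact ⟨‖l‖ * M, fun x => l.le_opNorm_of_le (hM x)⟩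
  exists_norm_fderiv_le := by
    obtain ⟨M, hM⟩ := hf.exists_norm_fderiv_le
    refine ⟨‖l‖ * M, fun x => ?_⟩
    have hderiv := l.hasFDerivAt.comp x (hf.differentiable x).hasFDerivAt
    rw [HasFDerivAt.fderiv (f := fun x => l (f x)) hderiv]
    exact (l.opNorm_comp_le _).trans (mul_le_mul_of_nonneg_left (hM x) (norm_nonneg l))

theorem fderiv_comp_add_smul (hf' : BoundedC1 (fderiv ℝ f)) (c : E) (r : ℝ) :
    BoundedC1 (fderiv ℝ fun z => f (c + r • z)) := by
  rw [_root_.fderiv_comp_add_smul]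
  exact (hf'.comp_add_smul c r).clm_comp (r • ContinuousLinearMap.id ℝ (E →L[ℝ] F))

theorem fderiv_apply (hf' : BoundedC1 (fderiv ℝ f)) (e : E) :
    BoundedC1 fun x => fderiv ℝ f x e :=
  hf'.clm_comp (ContinuousLinearMap.apply ℝ F e)

end BoundedC1

end BoundedC1

section Laplacian

variable {E : Type*} [NormedAddCommGroup E] [InnerProductSpace ℝ E] [FiniteDimensional ℝ E]

theorem laplacian_eq_sum_fderiv_fderiv {ι : Type*} [Fintype ι] (u : E → ℝ)
    (e : OrthonormalBasis ι ℝ E) (x : E) :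
    Δ u x = ∑ i, fderiv ℝ (fderiv ℝ u) x (e i) (e i) := by
  simp [InnerProductSpace.laplacian_eq_iteratedFDeriv_orthonormalBasis u e,
    iteratedFDeriv_two_apply]

theorem laplacian_eq_sum_fderiv_fderiv_apply {ι : Type*} [Fintype ι] {u : E → ℝ}
    (hu' : Differentiable ℝ (fderiv ℝ u)) (e : OrthonormalBasis ι ℝ E) (x : E) :
    Δ u x = ∑ i, fderiv ℝ (fun y => fderiv ℝ u y (e i)) x (e i) := by
  simp only [laplacian_eq_sum_fderiv_fderiv u e, fderiv_fderiv_apply (hu' x)]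

theorem laplacian_comp_add_smul (u : E → ℝ) (c : E) (r : ℝ) (z : E) :
    Δ (fun z => u (c + r • z)) z = r ^ 2 * Δ u (c + r • z) := by
  simp only [laplacian_eq_sum_fderiv_fderiv _ (stdOrthonormalBasis ℝ E),
    fderiv_fderiv_comp_add_smul, smul_apply, smul_eq_mul, Finset.mul_sum]
  ring_nf

end Laplacian

section GaussianWeight

variable {E : Type*} [NormedAddCommGroup E]

/-- The Gaussian density on `E`, left unnormalised: its total mass only enters the constant. -/
noncomputable def gaussianWeight (z : E) : ℝ := Real.exp (-(‖z‖ ^ 2 / 2))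

theorem gaussianWeight_pos (z : E) : 0 < gaussianWeight z := Real.exp_pos _

@[fun_prop]
theorem continuous_gaussianWeight : Continuous (gaussianWeight : E → ℝ) := by
  unfold gaussianWeight; fun_prop

theorem one_le_exp_mul_gaussianWeight {z : E} {R : ℝ} (hz : ‖z‖ ≤ R) :
    1 ≤ Real.exp (R ^ 2 / 2) * gaussianWeight z := by
  rw [gaussianWeight, ← Real.exp_add, Real.one_le_exp_iff]
  linarith [pow_le_pow_left₀ (norm_nonneg z) hz 2]

theorem one_add_norm_mul_gaussianWeight_le (z : E) :
    (1 + ‖z‖) * gaussianWeight z ≤ 2 * Real.exp (-(1 / 4) * ‖z‖ ^ 2) := by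
  have hlinear : 1 + ‖z‖ ≤ 2 * Real.exp (1 / 4 * ‖z‖ ^ 2) := by
    linarith [Real.add_one_le_exp (1 / 4 * ‖z‖ ^ 2), sq_nonneg (‖z‖ - 1)]
  calc (1 + ‖z‖) * gaussianWeight z
      ≤ 2 * Real.exp (1 / 4 * ‖z‖ ^ 2) * gaussianWeight z :=
        mul_le_mul_of_nonneg_right hlinear (gaussianWeight_pos z).le
    _ = 2 * Real.exp (-(1 / 4) * ‖z‖ ^ 2) := by
        rw [gaussianWeight, mul_assoc, ← Real.exp_add]; ring_nf

variable [InnerProductSpace ℝ E]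

theorem hasFDerivAt_gaussianWeight (z : E) :
    HasFDerivAt gaussianWeight (-gaussianWeight z • innerSL ℝ z) z := by
  convert! ((hasStrictFDerivAt_norm_sq z).hasFDerivAt.const_mul (-(1 / 2) : ℝ)).exp using 1
  · ext w
    simp only [gaussianWeight]
    ring_nf
  · ext w
    simp [gaussianWeight, ← div_eq_inv_mul]

variable [FiniteDimensional ℝ E] [MeasurableSpace E] [BorelSpace E]

theorem integrable_exp_neg_mul_norm_sq {a : ℝ} (ha : 0 < a) :
    Integrable fun z : E => Real.exp (-a * ‖z‖ ^ 2) := by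
  have hcexp := (GaussianFourier.integrable_cexp_neg_mul_sq_norm_add (V := E) (b := (a : ℂ))
    (by simpa using ha) 0 0).norm
  refine hcexp.congr (.of_forall fun z => ?_)
  simp [Complex.norm_exp, ← Complex.ofReal_pow]

theorem integrable_mul_gaussianWeight_of_le_one_add_norm {h : E → ℝ} (hc : Continuous h) {A : ℝ}
    (hA : ∀ z, |h z| ≤ A * (1 + ‖z‖)) : Integrable fun z => h z * gaussianWeight z := by
  have hA₀ : 0 ≤ A := by simpa using (abs_nonneg _).trans (hA 0)
  refine ((integrable_exp_neg_mul_norm_sq (by norm_num : (0 : ℝ) < 1 / 4)).const_mul (A * 2)).mono'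
    (by fun_prop : Continuous _).aestronglyMeasurable (.of_forall fun z => ?_)
  rw [Real.norm_eq_abs, abs_mul, abs_of_pos (gaussianWeight_pos z)]
  calc |h z| * gaussianWeight z
      ≤ A * (1 + ‖z‖) * gaussianWeight z :=
        mul_le_mul_of_nonneg_right (hA z) (gaussianWeight_pos z).le
    _ ≤ A * 2 * Real.exp (-(1 / 4) * ‖z‖ ^ 2) := by
        rw [mul_assoc, mul_assoc]
        exact mul_le_mul_of_nonneg_left (one_add_norm_mul_gaussianWeight_le z) hA₀

theorem integrable_mul_gaussianWeight {h : E → ℝ} (hc : Continuous h) {A : ℝ}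
    (hA : ∀ z, |h z| ≤ A) : Integrable fun z => h z * gaussianWeight z := by
  refine integrable_mul_gaussianWeight_of_le_one_add_norm hc (A := A) fun z => (hA z).trans ?_
  have hA₀ : 0 ≤ A := (abs_nonneg _).trans (hA z)
  exact le_mul_of_one_le_right hA₀ (by linarith [norm_nonneg z])

theorem integrable_gaussianWeight : Integrable (gaussianWeight : E → ℝ) := by
  simpa using integrable_mul_gaussianWeight (E := E) (h := fun _ => 1) continuous_const (A := 1)
    (by simp)

namespace BoundedC1

variable {f u : E → ℝ}

theorem integrable_mul_gaussianWeight (hf : BoundedC1 f) :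
    Integrable fun z => f z * gaussianWeight z := by
  obtain ⟨M, hM⟩ := hf.exists_norm_le
  exact _root_.integrable_mul_gaussianWeight hf.contDiff.continuous hM

theorem integrable_inner_mul_gaussianWeight (hf : BoundedC1 f) (e : E) :
    Integrable fun z => ⟪e, z⟫_ℝ * f z * gaussianWeight z := by
  obtain ⟨M, hM⟩ := hf.exists_norm_le
  have hM₀ : 0 ≤ M := (norm_nonneg _).trans (hM 0)
  have hcont := hf.contDiff.continuous
  refine integrable_mul_gaussianWeight_of_le_one_add_norm (by fun_prop) (A := ‖e‖ * M) fun z => ?_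
  rw [abs_mul]
  calc |⟪e, z⟫_ℝ| * |f z| ≤ ‖e‖ * ‖z‖ * M :=
        mul_le_mul (abs_real_inner_le_norm e z) (hM z) (abs_nonneg _) (by positivity)
    _ ≤ ‖e‖ * M * (1 + ‖z‖) := by linarith [mul_nonneg (norm_nonneg e) hM₀]

theorem integrable_fderiv_apply_mul_gaussianWeight (hf : BoundedC1 f) (e : E) :
    Integrable fun z => fderiv ℝ f z e * gaussianWeight z := by
  obtain ⟨N, hN⟩ := hf.exists_norm_fderiv_le
  exact _root_.integrable_mul_gaussianWeight (hf.continuous_fderiv.clm_apply continuous_const)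
    fun z => (fderiv ℝ f z).le_of_opNorm_le (hN z) e

theorem integral_inner_mul_gaussianWeight (hf : BoundedC1 f) (e : E) :
    ∫ z, ⟪e, z⟫_ℝ * f z * gaussianWeight z = ∫ z, fderiv ℝ f z e * gaussianWeight z := by
  have hweight (z : E) : f z * fderiv ℝ gaussianWeight z e =
      -(⟪e, z⟫_ℝ * f z * gaussianWeight z) := by
    rw [(hasFDerivAt_gaussianWeight z).fderiv, real_inner_comm]
    simp only [smul_apply, innerSL_apply_apply, smul_eq_mul]
    ring
  have hparts := integral_mul_fderiv_eq_neg_fderiv_mul_of_integrable (μ := volume) (v := e)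
    (hf.integrable_fderiv_apply_mul_gaussianWeight e)
    ((hf.integrable_inner_mul_gaussianWeight e).neg.congr (.of_forall fun z => (hweight z).symm))
    hf.integrable_mul_gaussianWeight
    (fun z _ => hf.differentiable z)
    (fun z _ => (hasFDerivAt_gaussianWeight z).differentiableAt)
  simpa only [hweight, integral_neg, neg_inj] using hparts

theorem integrable_laplacian_mul_gaussianWeight (hu' : BoundedC1 (fderiv ℝ u)) :
    Integrable fun z => Δ u z * gaussianWeight z := by
  simp only [laplacian_eq_sum_fderiv_fderiv_apply hu'.differentiable (stdOrthonormalBasis ℝ E),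
    Finset.sum_mul]
  exact integrable_finsetSum _ fun i _ =>
    (hu'.fderiv_apply _).integrable_fderiv_apply_mul_gaussianWeight _

theorem integral_laplacian_mul_gaussianWeight (hu' : BoundedC1 (fderiv ℝ u)) :
    ∫ z, Δ u z * gaussianWeight z = ∫ z, fderiv ℝ u z z * gaussianWeight z := by
  set e := stdOrthonormalBasis ℝ E
  have hexpand (l : E →L[ℝ] ℝ) (z : E) : l z = ∑ i, ⟪e i, z⟫_ℝ * l (e i) := by
    conv_lhs => rw [← e.sum_repr' z]
    simp only [map_sum, map_smul, smul_eq_mul]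
  simp only [laplacian_eq_sum_fderiv_fderiv_apply hu'.differentiable e,
    fun z => hexpand (fderiv ℝ u z) z, Finset.sum_mul]
  rw [integral_finsetSum _ fun i _ =>
      (hu'.fderiv_apply (e i)).integrable_fderiv_apply_mul_gaussianWeight (e i),
    integral_finsetSum _ fun i _ =>
      (hu'.fderiv_apply (e i)).integrable_inner_mul_gaussianWeight (e i)]
  exact Finset.sum_congr rfl fun i _ =>
    ((hu'.fderiv_apply (e i)).integral_inner_mul_gaussianWeight (e i)).symm

theorem integrable_fderiv_apply_self_mul_gaussianWeight (hu : BoundedC1 u) :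
    Integrable fun z => fderiv ℝ u z z * gaussianWeight z := by
  obtain ⟨N, hN⟩ := hu.exists_norm_fderiv_le
  have hN₀ : 0 ≤ N := (norm_nonneg _).trans (hN 0)
  refine integrable_mul_gaussianWeight_of_le_one_add_norm
    (hu.continuous_fderiv.clm_apply continuous_id) (A := N) fun z => ?_
  exact ((fderiv ℝ u z).le_of_opNorm_le (hN z) z).trans (by gcongr; linarith)

theorem neg_mul_le_integral_fderiv_apply_mul_gaussianWeight (hu : BoundedC1 u)
    (hu' : BoundedC1 (fderiv ℝ u)) {w : E} {K : ℝ} (hK : ∀ z, -K ≤ Δ u z + fderiv ℝ u z w) :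
    -K * ∫ z : E, gaussianWeight z ≤ ∫ z, fderiv ℝ u z (w + z) * gaussianWeight z := by
  have hlaplacian := hu'.integrable_laplacian_mul_gaussianWeight
  have hdrift := hu.integrable_fderiv_apply_mul_gaussianWeight w
  have hradial := hu.integrable_fderiv_apply_self_mul_gaussianWeight
  calc -K * ∫ z : E, gaussianWeight z = ∫ z : E, -K * gaussianWeight z :=
        (integral_const_mul _ _).symm
    _ ≤ ∫ z, (Δ u z * gaussianWeight z + fderiv ℝ u z w * gaussianWeight z) := by
        refine integral_mono (integrable_gaussianWeight.const_mul _) (hlaplacian.add hdrift)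
          fun z => ?_
        simp only [← add_mul]
        exact mul_le_mul_of_nonneg_right (hK z) (gaussianWeight_pos z).le
    _ = ∫ z, (fderiv ℝ u z z * gaussianWeight z + fderiv ℝ u z w * gaussianWeight z) := by
        rw [integral_add hlaplacian hdrift, hu'.integral_laplacian_mul_gaussianWeight,
          integral_add hradial hdrift]
    _ = ∫ z, fderiv ℝ u z (w + z) * gaussianWeight z := by
        simp only [map_add, add_mul, add_comm]

end BoundedC1

end GaussianWeight

section DriftMean

theorem hasDerivAt_driftPath {E : Type*} [NormedAddCommGroup E] [NormedSpace ℝ E]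
    (v x z : E) (r : ℝ) :
    HasDerivAt (fun s : ℝ => x + (s ^ 2 / 2) • v + s • z) (r • v + z) r := by
  have hsq : HasDerivAt (fun s : ℝ => s ^ 2 / 2) r r := by
    simpa using (hasDerivAt_pow 2 r).div_const 2
  simpa using ((hsq.smul_const v).const_add x).fun_add ((hasDerivAt_id r).smul_const z)

variable {E : Type*} [NormedAddCommGroup E] [InnerProductSpace ℝ E] [FiniteDimensional ℝ E]
  [MeasurableSpace E] [BorelSpace E] {u : E → ℝ} {v x : E} {r : ℝ}

/-- The Gaussian average of `u` around `x` at scale `r`, with the centre moved along the drift `v`.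
In the time variable `r ^ 2 / 2` and up to the mass of the weight, this is the heat semigroup
generated by `Δ + v · ∇` applied to `u`; parametrising by `r` makes it differentiable at `r = 0`. -/
noncomputable def driftMean (u : E → ℝ) (v x : E) (r : ℝ) : ℝ :=
  ∫ z, u (x + (r ^ 2 / 2) • v + r • z) * gaussianWeight z

theorem driftMean_zero (u : E → ℝ) (v x : E) :
    driftMean u v x 0 = u x * ∫ z : E, gaussianWeight z := by
  simp [driftMean, integral_const_mul]

theorem hasDerivAt_driftMean (hu : BoundedC1 u) (v x : E) (r : ℝ) :
    HasDerivAt (driftMean u v x)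
      (∫ z, fderiv ℝ u (x + (r ^ 2 / 2) • v + r • z) (r • v + z) * gaussianWeight z) r := by
  obtain ⟨N, hN⟩ := hu.exists_norm_fderiv_le
  have hN₀ : 0 ≤ N := (norm_nonneg _).trans (hN 0)
  have hcont := hu.contDiff.continuous
  have hcont' := hu.continuous_fderiv
  have hspeed {s : ℝ} (hs : s ∈ ball r 1) (z : E) :
      ‖s • v + z‖ ≤ (|r| + 1) * ‖v‖ + ‖z‖ := by
    have hs' : ‖s‖ ≤ |r| + 1 := (norm_lt_of_mem_ball hs).le
    refine (norm_add_le _ _).trans ?_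
    rw [norm_smul]
    gcongr
  refine (hasDerivAt_integral_of_dominated_loc_of_deriv_le
    (F' := fun s z => fderiv ℝ u (x + (s ^ 2 / 2) • v + s • z) (s • v + z) * gaussianWeight z)
    (bound := fun z => N * ((|r| + 1) * ‖v‖ + ‖z‖) * gaussianWeight z)
    (ball_mem_nhds r one_pos)
    (.of_forall fun s => (by fun_prop : Continuous _).aestronglyMeasurable)
    (hu.comp_add_smul _ r).integrable_mul_gaussianWeight
    (by fun_prop : Continuous _).aestronglyMeasurable
    (.of_forall fun z s hs => ?_) ?_ (.of_forall fun z s _ => ?_)).2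
  · rw [norm_mul, Real.norm_of_nonneg (gaussianWeight_pos z).le]
    exact mul_le_mul_of_nonneg_right
      ((ContinuousLinearMap.le_of_opNorm_le _ (hN _) _).trans
        (mul_le_mul_of_nonneg_left (hspeed hs z) hN₀)) (gaussianWeight_pos z).le
  · refine integrable_mul_gaussianWeight_of_le_one_add_norm (by fun_prop)
      (A := N * ((|r| + 1) * ‖v‖ + 1)) fun z => ?_
    rw [abs_of_nonneg (by positivity), mul_assoc]
    refine mul_le_mul_of_nonneg_left ?_ hN₀
    linarith [mul_nonneg (mul_nonneg (by positivity : 0 ≤ |r| + 1) (norm_nonneg v)) (norm_nonneg z)]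
  · exact ((hu.differentiable _).hasFDerivAt.comp_hasDerivAt s
      (hasDerivAt_driftPath v x z s)).mul_const _

theorem neg_mul_le_deriv_driftMean (hu : BoundedC1 u) (hu' : BoundedC1 (fderiv ℝ u)) {K : ℝ}
    (hK : ∀ y, -K ≤ Δ u y + fderiv ℝ u y v) (hr : 0 < r) :
    -(K * r) * ∫ z : E, gaussianWeight z ≤ deriv (driftMean u v x) r := by
  rw [(hasDerivAt_driftMean hu v x r).deriv]
  set c := x + (r ^ 2 / 2) • v
  have hrescaled := (hu.comp_add_smul c r).neg_mul_le_integral_fderiv_apply_mul_gaussianWeight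
    (hu'.fderiv_comp_add_smul c r) (w := r • v) (K := r ^ 2 * K) fun z => by
      rw [laplacian_comp_add_smul, fderiv_comp_add_smul, smul_apply, map_smul, smul_eq_mul,
        smul_eq_mul]
      linarith [mul_le_mul_of_nonneg_left (hK (c + r • z)) (sq_nonneg r)]
  simp only [fderiv_comp_add_smul, smul_apply, smul_eq_mul, mul_assoc, integral_const_mul]
    at hrescaled
  refine le_of_mul_le_mul_left ?_ hr
  linarith

theorem sub_mul_le_driftMean (hu : BoundedC1 u) (hu' : BoundedC1 (fderiv ℝ u)) {K : ℝ}
    (hK : ∀ y, -K ≤ Δ u y + fderiv ℝ u y v) (x : E) (hr : 0 ≤ r) :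
    (u x - K * r ^ 2 / 2) * ∫ z : E, gaussianWeight z ≤ driftMean u v x r := by
  set m := ∫ z : E, gaussianWeight z
  have hderiv (s : ℝ) : HasDerivAt (fun s => driftMean u v x s + K * m / 2 * s ^ 2)
      (deriv (driftMean u v x) s + K * m * s) s := by
    convert! (hasDerivAt_driftMean hu v x s).differentiableAt.hasDerivAt.add
      ((hasDerivAt_pow 2 s).const_mul (K * m / 2)) using 1
    ring
  have hmono : MonotoneOn (fun s => driftMean u v x s + K * m / 2 * s ^ 2) (Set.Ici 0) := by
    refine monotoneOn_of_deriv_nonneg (convex_Ici 0)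
      (fun s _ => (hderiv s).continuousAt.continuousWithinAt)
      (fun s _ => (hderiv s).differentiableAt.differentiableWithinAt) fun s hs => ?_
    rw [interior_Ici] at hs
    rw [(hderiv s).deriv]
    linarith [neg_mul_le_deriv_driftMean (x := x) hu hu' hK hs]
  have hle := hmono Set.self_mem_Ici hr hr
  simp only [driftMean_zero] at hle
  linarith

end DriftMean

section L1Bound

variable {E : Type*} [NormedAddCommGroup E] [InnerProductSpace ℝ E] [FiniteDimensional ℝ E]
  [MeasurableSpace E] [BorelSpace E]

theorem setIntegral_abs_le_exp_mul_neg_integral_gaussianWeight {u : E → ℝ} (hu : BoundedC1 u)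
    (hu₀ : ∀ x, u x ≤ 0) {S : Set E} {c : E} {R : ℝ} (hS : S ⊆ closedBall c R) :
    ∫ x in S, |u x| ≤ Real.exp (R ^ 2 / 2) * -∫ z, u (c + z) * gaussianWeight z := by
  have hweighted : Integrable fun x => Real.exp (R ^ 2 / 2) * -(u x * gaussianWeight (x - c)) := by
    have hcentred := (hu.comp_add_smul c 1).integrable_mul_gaussianWeight.comp_sub_right c
    simpa using hcentred.neg.const_mul (Real.exp (R ^ 2 / 2))
  have hweighted₀ (x : E) : 0 ≤ -(u x * gaussianWeight (x - c)) :=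
    neg_nonneg.mpr (mul_nonpos_of_nonpos_of_nonneg (hu₀ x) (gaussianWeight_pos _).le)
  have hball : IntegrableOn (fun x => |u x|) (closedBall c R) :=
    hu.contDiff.continuous.abs.continuousOn.integrableOn_compact (isCompact_closedBall c R)
  calc ∫ x in S, |u x|
      ≤ ∫ x in closedBall c R, |u x| :=
        setIntegral_mono_set hball (.of_forall fun x => abs_nonneg (u x)) hS.eventuallyLE
    _ ≤ ∫ x in closedBall c R, Real.exp (R ^ 2 / 2) * -(u x * gaussianWeight (x - c)) := by
        refine setIntegral_mono_on hball hweighted.integrableOn measurableSet_closedBall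
          fun x hx => ?_
        rw [abs_of_nonpos (hu₀ x)]
        linarith [mul_le_mul_of_nonneg_right
          (one_le_exp_mul_gaussianWeight (mem_closedBall_iff_norm.mp hx)) (neg_nonneg.mpr (hu₀ x))]
    _ ≤ ∫ x, Real.exp (R ^ 2 / 2) * -(u x * gaussianWeight (x - c)) :=
        setIntegral_le_integral hweighted
          (.of_forall fun x => mul_nonneg (Real.exp_pos _).le (hweighted₀ x))
    _ = Real.exp (R ^ 2 / 2) * -∫ z, u (c + z) * gaussianWeight z := by
        rw [integral_const_mul, integral_neg, ← integral_add_left_eq_self _ c]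
        simp only [add_sub_cancel_left]

theorem setIntegral_abs_le_of_neg_le_laplacian_add_fderiv {u : E → ℝ} (hu : BoundedC1 u)
    (hu' : BoundedC1 (fderiv ℝ u)) (hu₀ : ∀ x, u x ≤ 0) {v x : E} (hx : u x = 0) {K : ℝ}
    (hK : ∀ y, -K ≤ Δ u y + fderiv ℝ u y v) {S : Set E} {R : ℝ}
    (hS : S ⊆ closedBall (x + (1 / 2 : ℝ) • v) R) :
    ∫ y in S, |u y| ≤ Real.exp (R ^ 2 / 2) * (K / 2 * ∫ z : E, gaussianWeight z) := by
  have hmean := sub_mul_le_driftMean hu hu' hK x zero_le_one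
  simp only [driftMean, hx, one_pow, one_smul] at hmean
  refine (setIntegral_abs_le_exp_mul_neg_integral_gaussianWeight hu hu₀ hS).trans ?_
  exact mul_le_mul_of_nonneg_left (by linarith) (Real.exp_pos _).le

theorem L1_bound_on_torus_general {ι : Type*} [Finite ι] (b : Basis ι ℝ E) (v : E) (K : ℝ)
    {S : Set E} (hS : Bornology.IsBounded S) :
    ∃ C : ℝ, 0 < C ∧
      ∀ u : E → ℝ,
        ContDiff ℝ 2 u →
        (∀ i, Periodic u (b i)) →
        (⨆ x, u x) = 0 →
        (∀ x, -K ≤ Δ u x + fderiv ℝ u x v) →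
        ∫ x in S, |u x| ≤ C := by
  obtain ⟨R, hR⟩ := hS.exists_norm_le
  obtain ⟨D, hD⟩ := (ZSpan.fundamentalDomain_isBounded b).exists_norm_le
  set R' := R + (D + ‖(1 / 2 : ℝ) • v‖)
  refine ⟨max (Real.exp (R' ^ 2 / 2) * (K / 2 * ∫ z : E, gaussianWeight z)) 1, by positivity,
    fun u hu hp hsup hK => le_max_of_le_left ?_⟩
  have hu₁ : BoundedC1 u := .of_periodic (hu.of_le one_le_two) hp
  have hu₂ : BoundedC1 (fderiv ℝ u) :=
    .of_periodic (hu.fderiv_right (by norm_num)) fun i => periodic_fderiv (hp i)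
  obtain ⟨x, hxD, hx⟩ := exists_mem_fundamentalDomain_eq_iSup_of_periodic hu.continuous hp
  have hbdd : BddAbove (Set.range u) := (isCompact_range_of_periodic hu.continuous hp).bddAbove
  have hu₀ (y : E) : u y ≤ 0 := hsup ▸ le_ciSup hbdd y
  refine setIntegral_abs_le_of_neg_le_laplacian_add_fderiv hu₁ hu₂ hu₀ (hx.trans hsup) hK
    fun y hy => mem_closedBall_iff_norm.mpr ?_
  exact (norm_sub_le _ _).trans (add_le_add (hR y hy) ((norm_add_le _ _).trans
    (add_le_add_left (hD x hxD) _)))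

end L1Bound

section Torus

theorem isBounded_setOf_forall_mem_Icc (ι : Type*) [Finite ι] :
    Bornology.IsBounded {x : EuclideanSpace ℝ ι | ∀ i, 0 ≤ x i ∧ x i ≤ 1} := by
  have := Fintype.ofFinite ι
  refine isBounded_iff_forall_norm_le.mpr ⟨√(∑ _i : ι, 1), fun x hx => ?_⟩
  rw [EuclideanSpace.norm_eq]
  gcongr with i
  exact pow_le_one₀ (norm_nonneg _) (abs_le.mpr ⟨by linarith [(hx i).1], (hx i).2⟩)

theorem sum_pd_pd_eq_laplacian {u : EuclideanSpace ℝ (Fin 3) → ℝ} (hu : ContDiff ℝ 2 u)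
    (x : EuclideanSpace ℝ (Fin 3)) : ∑ i, pd i (pd i u) x = Δ u x := by
  have hu' : Differentiable ℝ (fderiv ℝ u) :=
    (hu.fderiv_right (m := 1) (by norm_num)).differentiable one_ne_zero
  rw [laplacian_eq_sum_fderiv_fderiv_apply hu' (EuclideanSpace.basisFun (Fin 3) ℝ)]
  simp only [EuclideanSpace.basisFun_apply]
  rfl

end Torus

/-- The `L¹` estimate on the three-torus: a smooth `ℤ³`-periodic function `u` on `ℝ³` with
`sup u = 0` satisfying `Δu + ∂_t u ≥ −2` (coordinates `(x, y, t)`, with `t` the third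
coordinate) has a uniform `L¹` bound over the unit cube. -/
theorem L1_bound_on_torus :
    ∃ C : ℝ, 0 < C ∧
      ∀ u : EuclideanSpace ℝ (Fin 3) → ℝ,
        ContDiff ℝ (⊤ : ℕ∞) u →
        (∀ (x a : EuclideanSpace ℝ (Fin 3)), (∀ i, ∃ k : ℤ, a i = (k : ℝ)) →
          u (x + a) = u x) →
        (⨆ x, u x) = 0 →
        (∀ x, -2 ≤ (∑ i, pd i (pd i u) x) + pd 2 u x) →
        ∫ x in {x : EuclideanSpace ℝ (Fin 3) | ∀ i, 0 ≤ x i ∧ x i ≤ 1}, |u x| ≤ C := by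
  obtain ⟨C, hC, hbound⟩ := L1_bound_on_torus_general (EuclideanSpace.basisFun (Fin 3) ℝ).toBasis
    (EuclideanSpace.single 2 1) 2 (isBounded_setOf_forall_mem_Icc (Fin 3))
  refine ⟨C, hC, fun u hu hp hsup hL => ?_⟩
  have hu₂ : ContDiff ℝ 2 u := contDiff_infty.mp hu 2
  have hperiod (i : Fin 3) :
      Periodic u ((EuclideanSpace.basisFun (Fin 3) ℝ).toBasis i) := fun x =>
    hp x _ fun j => ⟨if j = i then 1 else 0, by simp⟩
  exact hbound u hu₂ hperiod hsup fun x => sum_pd_pd_eq_laplacian hu₂ x ▸ hL x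
end

section
/- Fix θ ∈ ℝ and for a C² function u of (x, y, t) ∈ ℝ³ write u_X = cosθ·∂_x u − sinθ·∂_y u, u_Y = sinθ·∂_x u + cosθ·∂_y u, with u_XX, u_XY, u_Xt, u_YY, u_tt the corresponding second derivatives. For every smooth ℤ³-periodic function F : ℝ³ → ℝ there exists δ > 0, depending only on θ and F, such that every smooth ℤ³-periodic function u : ℝ³ → ℝ with sup u = 0 satisfying (u_XX + 1)(u_YY + u_tt + u_t + 1) − u_XY² − u_Xt² = e^F with u_XX + 1 > 0 and u_YY + u_tt + u_t + 1 > 0 at every point obeys |{ x ∈ [0,1)³ : u(x) ≤ inf u + 1 }| ≥ δ, where | · | denotes Lebesgue measure. -/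
open MeasureTheory

/-- The derivative `w_X = cos θ ∂_x w − sin θ ∂_y w`. -/
noncomputable def Xd (θ : ℝ) (w : EuclideanSpace ℝ (Fin 3) → ℝ) :
    EuclideanSpace ℝ (Fin 3) → ℝ :=
  fun x => Real.cos θ * pd 0 w x - Real.sin θ * pd 1 w x

/-- The derivative `w_Y = sin θ ∂_x w + cos θ ∂_y w`. -/
noncomputable def Yd (θ : ℝ) (w : EuclideanSpace ℝ (Fin 3) → ℝ) :
    EuclideanSpace ℝ (Fin 3) → ℝ :=
  fun x => Real.sin θ * pd 0 w x + Real.cos θ * pd 1 w x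

/-!
Let `u` attain its minimum at `x₀`. For `‖p‖ ≤ c r` the function `u + c‖· - x₀‖² - ⟪p, ·⟫` has a
local minimum in the ball of radius `r` around `x₀`, so the gradient of `u + c‖· - x₀‖²` maps the
set of such minima onto a ball of radius `c r`, and the area formula bounds the measure of that set
from below once the determinant of `D²u + 2c` is bounded on it. There `D²u + 2c` is positive, so
`det ≤ trace ^ n`, and Cauchy–Schwarz for `D²u + 2c` absorbs the mixed derivatives of the equation,
which therefore controls the trace: for small `c` the coefficients `u_XX + 1` and
`u_YY + u_tt + u_t + 1` exceed the corresponding sums of diagonal entries of `D²u + 2c` by at least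
`1/2`. On the set of minima `u ≤ inf u + c r²`, and the ball of radius `r < 1/2` containing it fits
into a translate of the unit cube, so `ℤ³`-periodicity carries the bound over to the cube.
-/

open Module InnerProductSpace
open scoped Gradient RealInnerProductSpace Pointwise

section Lattice

variable {ι E : Type*} [Finite ι] [NormedAddCommGroup E] [NormedSpace ℝ E] (b : Basis ι ℝ E)

lemma exists_forall_le_of_lattice_periodic {f : E → ℝ} (hf : Continuous f)
    (hper : ∀ v ∈ Submodule.span ℤ (Set.range b), Function.Periodic f v) :
    ∃ x₀, ∀ y, f x₀ ≤ f y := by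
  have := Fintype.ofFinite ι
  have := b.finiteDimensional_of_finite
  have := FiniteDimensional.proper_real E
  have hcompact : IsCompact (closure (ZSpan.fundamentalDomain b)) :=
    (ZSpan.fundamentalDomain_isBounded b).isCompact_closure
  obtain ⟨x₀, -, hmin⟩ := hcompact.exists_isMinOn
    ⟨_, subset_closure (ZSpan.fract_mem_fundamentalDomain b 0)⟩ hf.continuousOn
  refine ⟨x₀, fun y => ?_⟩
  calc f x₀ ≤ f (ZSpan.fract b y) := hmin (subset_closure (ZSpan.fract_mem_fundamentalDomain b y))
    _ = f y := (hper _ (ZSpan.floor b y).2).sub_eq y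

lemma measure_inter_vadd_fundamentalDomain [MeasurableSpace E] [BorelSpace E] (μ : Measure E)
    [μ.IsAddLeftInvariant] {A : Set E} (hA : MeasurableSet A)
    (hinv : ∀ v ∈ Submodule.span ℤ (Set.range b), (v + ·) ⁻¹' A = A) (x : E) :
    μ (A ∩ (x +ᵥ ZSpan.fundamentalDomain b)) = μ (A ∩ ZSpan.fundamentalDomain b) := by
  have hdom := ZSpan.isAddFundamentalDomain' b μ
  have : Countable (Submodule.span ℤ (Set.range b)).toAddSubgroup :=
    inferInstanceAs (Countable (Submodule.span ℤ (Set.range b)))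
  exact (hdom.vadd_of_comm x).measure_set_eq hdom hA fun g => hinv g g.2

end Lattice

section IntegerPeriodic

variable {ι : Type*}

/-- Periodicity under the integer lattice of a function on Euclidean space, i.e. being the lift of a
function on the torus. -/
def IsIntegerPeriodic {α : Type*} (f : EuclideanSpace ℝ ι → α) : Prop :=
  ∀ x a : EuclideanSpace ℝ ι, (∀ i, ∃ k : ℤ, a i = k) → f (x + a) = f x

lemma mem_span_int_range_basisFun [Fintype ι] {a : EuclideanSpace ℝ ι} :
    a ∈ Submodule.span ℤ (Set.range (EuclideanSpace.basisFun ι ℝ).toBasis) ↔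
      ∀ i, ∃ k : ℤ, a i = k := by
  simp only [Basis.mem_span_iff_repr_mem, OrthonormalBasis.coe_toBasis_repr_apply,
    EuclideanSpace.basisFun_repr, Set.mem_range, algebraMap_int_eq, eq_intCast, eq_comm]

lemma mem_fundamentalDomain_basisFun [Fintype ι] {x : EuclideanSpace ℝ ι} :
    x ∈ ZSpan.fundamentalDomain (EuclideanSpace.basisFun ι ℝ).toBasis ↔
      ∀ i, 0 ≤ x i ∧ x i < 1 := by
  simp [ZSpan.mem_fundamentalDomain]

lemma closedBall_subset_vadd_fundamentalDomain [Fintype ι] (x₀ : EuclideanSpace ℝ ι) {r : ℝ}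
    (hr : r < 1 / 2) :
    Metric.closedBall x₀ r ⊆ (x₀ - WithLp.toLp 2 fun _ => 1 / 2) +ᵥ
      ZSpan.fundamentalDomain (EuclideanSpace.basisFun ι ℝ).toBasis := by
  intro x hx
  rw [Set.mem_vadd_set_iff_neg_vadd_mem, mem_fundamentalDomain_basisFun]
  intro i
  have hi := abs_le.1 ((PiLp.norm_apply_le (x - x₀) i).trans (mem_closedBall_iff_norm.1 hx))
  simp only [PiLp.sub_apply, neg_sub, vadd_eq_add, PiLp.add_apply] at hi ⊢
  constructor <;> linarith

namespace IsIntegerPeriodic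

variable {f : EuclideanSpace ℝ ι → ℝ}

lemma periodic_of_mem_span [Fintype ι] {α : Type*} {f : EuclideanSpace ℝ ι → α}
    (hf : IsIntegerPeriodic f) :
    ∀ v ∈ Submodule.span ℤ (Set.range (EuclideanSpace.basisFun ι ℝ).toBasis),
      Function.Periodic f v :=
  fun v hv x => hf x v (mem_span_int_range_basisFun.1 hv)

lemma exists_forall_le [Finite ι] (hf : IsIntegerPeriodic f) (hcont : Continuous f) :
    ∃ x₀, ∀ y, f x₀ ≤ f y := by
  have := Fintype.ofFinite ι
  exact exists_forall_le_of_lattice_periodic _ hcont hf.periodic_of_mem_span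

lemma volume_closedBall_inter_sublevel_le [Fintype ι] (hf : IsIntegerPeriodic f)
    (hmeas : Measurable f) (x₀ : EuclideanSpace ℝ ι) {r : ℝ} (hr : r < 1 / 2) (m : ℝ) :
    volume (Metric.closedBall x₀ r ∩ {x | f x ≤ m}) ≤
      volume {x : EuclideanSpace ℝ ι | (∀ i, 0 ≤ x i ∧ x i < 1) ∧ f x ≤ m} := by
  set b := (EuclideanSpace.basisFun ι ℝ).toBasis
  calc volume (Metric.closedBall x₀ r ∩ {x | f x ≤ m})
      ≤ volume ({x | f x ≤ m} ∩
          ((x₀ - WithLp.toLp 2 fun _ => 1 / 2) +ᵥ ZSpan.fundamentalDomain b)) := by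
        rw [Set.inter_comm]
        gcongr
        exact closedBall_subset_vadd_fundamentalDomain x₀ hr
    _ = volume ({x | f x ≤ m} ∩ ZSpan.fundamentalDomain b) :=
        measure_inter_vadd_fundamentalDomain b volume (hmeas measurableSet_Iic)
          (fun v hv => by ext x; simp [add_comm v, hf.periodic_of_mem_span v hv x]) _
    _ = volume {x : EuclideanSpace ℝ ι | (∀ i, 0 ≤ x i ∧ x i < 1) ∧ f x ≤ m} := by
        congr 1
        ext x
        simp only [Set.mem_inter_iff, Set.mem_ofPred_eq, b, mem_fundamentalDomain_basisFun,
          and_comm]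

end IsIntegerPeriodic

end IntegerPeriodic

section Hessian

variable {E : Type*} [NormedAddCommGroup E] [InnerProductSpace ℝ E]

section

variable [CompleteSpace E]

/-- The Hessian of `u` at `x` as an endomorphism, i.e. the derivative of the gradient field. -/
noncomputable def hessian (u : E → ℝ) (x : E) : E →L[ℝ] E :=
  fderiv ℝ (∇ u) x

lemma contDiff_gradient {n : WithTop ℕ∞} {u : E → ℝ} (hu : ContDiff ℝ (n + 1) u) :
    ContDiff ℝ n (∇ u) := by
  let e : StrongDual ℝ E ≃L[ℝ] E := (toDual ℝ E).symm.toContinuousLinearEquiv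
  exact e.contDiff.comp (hu.fderiv_right le_rfl)

lemma inner_hessian_left {u : E → ℝ} (hu : ContDiff ℝ 2 u) (x a b : E) :
    ⟪hessian u x a, b⟫ = fderiv ℝ (fun y => fderiv ℝ u y b) x a := by
  have h : DifferentiableAt ℝ (∇ u) x := (contDiff_gradient hu).differentiable one_ne_zero x
  have hb : (fun y => fderiv ℝ u y b) = fun y => ⟪∇ u y, b⟫ :=
    funext fun y => (inner_gradient_left ..).symm
  simp [hb, hessian, fderiv_inner_apply ℝ h (differentiableAt_const b)]

lemma isSymmetric_hessian {u : E → ℝ} (hu : ContDiff ℝ 2 u) (x : E) :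
    (hessian u x).IsSymmetric := by
  have hd : DifferentiableAt ℝ (fderiv ℝ u) x :=
    (hu.fderiv_right le_rfl).differentiable one_ne_zero x
  have happly (a b : E) : fderiv ℝ (fun y => fderiv ℝ u y b) x a = fderiv ℝ (fderiv ℝ u) x a b := by
    simp [fderiv_clm_apply hd (differentiableAt_const b)]
  intro a b
  rw [ContinuousLinearMap.coe_coe, real_inner_comm _ a, inner_hessian_left hu,
    inner_hessian_left hu, happly, happly]
  exact hu.contDiffAt.isSymmSndFDerivAt (by simp) a b

end

lemma abs_det_le_trace_pow_finrank [FiniteDimensional ℝ E] {A : E →ₗ[ℝ] E} (hA : A.IsPositive) :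
    |A.det| ≤ A.trace ℝ E ^ finrank ℝ E := by
  have hnonneg := hA.nonneg_eigenvalues rfl
  rw [hA.isSymmetric.det_eq_prod_eigenvalues rfl, hA.isSymmetric.trace_eq_sum_eigenvalues rfl]
  simp only [RCLike.ofReal_real_eq_id, id_eq]
  rw [abs_of_nonneg (Finset.prod_nonneg fun i _ => hnonneg i)]
  calc ∏ i, hA.isSymmetric.eigenvalues rfl i
      ≤ ∏ _i : Fin (finrank ℝ E), ∑ i, hA.isSymmetric.eigenvalues rfl i :=
        Finset.prod_le_prod (fun i _ => hnonneg i) fun i hi =>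
          Finset.single_le_sum (fun j _ => hnonneg j) hi
    _ = (∑ i, hA.isSymmetric.eigenvalues rfl i) ^ finrank ℝ E := by
        simp only [Finset.prod_const, Finset.card_univ, Fintype.card_fin]

lemma inner_sq_le_of_isPositive {A : E →L[ℝ] E} (hA : A.IsPositive) (a b : E) :
    ⟪A a, b⟫ ^ 2 ≤ ⟪A a, a⟫ * ⟪A b, b⟫ :=
  LinearMap.BilinForm.apply_sq_le_of_symm (B := (innerₗ E).comp A.toLinearMap)
    (fun x => hA.inner_nonneg_left x)
    ⟨fun x y => by simpa using (hA.isSymmetric x y).trans (real_inner_comm _ _)⟩ a b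

lemma deriv_deriv_nonneg_of_isLocalMin {f : ℝ → ℝ} {x : ℝ} (hf : ContinuousAt f x)
    (hmin : IsLocalMin f x) : 0 ≤ deriv (deriv f) x := by
  by_contra! hneg
  have hmax : IsLocalMax f x := isLocalMax_of_deriv_deriv_neg hneg hmin.deriv_eq_zero hf
  have hconst : f =ᶠ[nhds x] fun _ => f x := by
    filter_upwards [hmin, hmax] with y hge hle using le_antisymm hle hge
  simp [hconst.deriv.deriv_eq] at hneg

lemma isPositive_hessian_of_isLocalMin [CompleteSpace E] {u : E → ℝ} (hu : ContDiff ℝ 2 u) {x : E}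
    (hmin : IsLocalMin u x) : (hessian u x).IsPositive := by
  refine (ContinuousLinearMap.isPositive_iff _).2 ⟨isSymmetric_hessian hu x, fun a => ?_⟩
  have hline (s : ℝ) : HasDerivAt (fun s : ℝ => x + s • a) a s := by
    simpa using ((hasDerivAt_id s).smul_const a).const_add x
  have hline_zero : Filter.Tendsto (fun s : ℝ => x + s • a) (nhds 0) (nhds x) := by
    simpa [ContinuousAt] using (hline 0).continuousAt
  have hdiff : Differentiable ℝ fun y => fderiv ℝ u y a :=
    ((hu.fderiv_right le_rfl).clm_apply contDiff_const).differentiable one_ne_zero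
  have hderiv : deriv (fun s : ℝ => u (x + s • a)) = fun s => fderiv ℝ u (x + s • a) a :=
    funext fun s => ((hu.differentiable two_ne_zero _).hasFDerivAt.comp_hasDerivAt s
      (hline s)).deriv
  have hderiv₂ : deriv (deriv fun s : ℝ => u (x + s • a)) 0 = ⟪hessian u x a, a⟫ := by
    rw [hderiv, inner_hessian_left hu]
    simpa [Function.comp_def] using
      ((hdiff _).hasFDerivAt.comp_hasDerivAt (0 : ℝ) (hline 0)).deriv
  rw [← hderiv₂]
  refine deriv_deriv_nonneg_of_isLocalMin
    (hu.continuous.continuousAt.comp (hline 0).continuousAt) ?_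
  simpa [IsLocalMin, IsMinFilter] using hline_zero.eventually hmin

end Hessian

section ContactSet

variable {E : Type*} [NormedAddCommGroup E] [InnerProductSpace ℝ E] {u : E → ℝ}

section

variable [CompleteSpace E]

/-- The Hessian at `x` of `u + c‖· - x₀‖²`; it does not depend on `x₀`. -/
noncomputable def shiftedHessian (u : E → ℝ) (c : ℝ) (x : E) : E →L[ℝ] E :=
  hessian u x + (2 * c) • ContinuousLinearMap.id ℝ E

lemma hasFDerivAt_gradient_add_smul_sub (hu : ContDiff ℝ 2 u) (c : ℝ) (x₀ x : E) :
    HasFDerivAt (fun y => ∇ u y + (2 * c) • (y - x₀)) (shiftedHessian u c x) x :=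
  ((contDiff_gradient hu).differentiable one_ne_zero x).hasFDerivAt.add
    (((hasFDerivAt_id x).sub_const x₀).const_smul (2 * c))

lemma gradient_add_mul_norm_sub_sq_sub_inner (hu : Differentiable ℝ u) (c : ℝ) (x₀ p : E) :
    ∇ (fun y => u y + c * ‖y - x₀‖ ^ 2 - ⟪p, y⟫) =
      fun y => ∇ u y + (2 * c) • (y - x₀) - p := by
  refine gradient_eq fun x => hasGradientAt_iff_hasFDerivAt.2 ?_
  have hsq : HasFDerivAt (fun y => c * ‖y - x₀‖ ^ 2) (c • 2 • innerSL ℝ (x - x₀)) x := by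
    simpa using (((hasFDerivAt_id x).sub_const x₀).norm_sq).const_mul c
  refine (((hu x).hasGradientAt.hasFDerivAt.add hsq).sub
    (innerSL ℝ p).hasFDerivAt).congr_fderiv ?_
  ext a
  simp only [sub_apply, add_apply, smul_apply, toDual_apply_apply, innerSL_apply_apply,
    inner_sub_left, inner_add_left, real_inner_smul_left, nsmul_eq_mul, smul_eq_mul]
  ring

lemma hessian_add_mul_norm_sub_sq_sub_inner (hu : ContDiff ℝ 2 u) (c : ℝ) (x₀ p x : E) :
    hessian (fun y => u y + c * ‖y - x₀‖ ^ 2 - ⟪p, y⟫) x = shiftedHessian u c x := by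
  rw [hessian, gradient_add_mul_norm_sub_sq_sub_inner (hu.differentiable two_ne_zero)]
  exact ((hasFDerivAt_gradient_add_smul_sub hu c x₀ x).sub_const p).fderiv

/-- The contact set of the ABP method at a minimum point `x₀` of `u`: the points of the closed ball
of radius `r` around `x₀` at which `u + c‖· - x₀‖²` can touch an affine function of slope at most
`c * r` from below. Rather than the touching itself, it records the (closed) conditions on `u`, its
gradient and its Hessian that touching entails, the gradient of `u` being the slope minus
`2 c (x - x₀)`. -/
def contactSet (u : E → ℝ) (x₀ : E) (c r : ℝ) : Set E :=
  {x | x ∈ Metric.closedBall x₀ r ∧ u x ≤ u x₀ + c * r ^ 2 ∧ ‖∇ u x‖ ≤ 3 * c * r ∧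
    (shiftedHessian u c x).IsPositive}

lemma isClosed_contactSet (hu : ContDiff ℝ 2 u) (x₀ : E) (c r : ℝ) :
    IsClosed (contactSet u x₀ c r) := by
  have hgrad : ContDiff ℝ 1 (∇ u) := contDiff_gradient hu
  have hhess : Continuous (shiftedHessian u c) :=
    (hgrad.continuous_fderiv one_ne_zero).add continuous_const
  have hsymm (x : E) : (shiftedHessian u c x).IsSymmetric :=
    (isSymmetric_hessian hu x).add (.smul (by simp) .id)
  simp only [contactSet, ContinuousLinearMap.isPositive_iff, hsymm, true_and, Set.ofPred_and,
    Set.ofPred_forall]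
  refine Metric.isClosed_closedBall.inter <|
    (isClosed_le hu.continuous continuous_const).inter <|
    (isClosed_le hgrad.continuous.norm continuous_const).inter <|
    isClosed_iInter fun a => isClosed_le continuous_const ?_
  fun_prop

end

variable {x₀ : E} {c r : ℝ}

lemma exists_isLocalMin_add_mul_norm_sub_sq_sub_inner [ProperSpace E]
    (hu : Continuous u) (hmin : ∀ y, u x₀ ≤ u y) (hc : 0 < c) (hr : 0 < r) {p : E}
    (hp : ‖p‖ ≤ c * r) :
    ∃ x ∈ Metric.closedBall x₀ r, u x ≤ u x₀ + c * r ^ 2 ∧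
      IsLocalMin (fun y => u y + c * ‖y - x₀‖ ^ 2 - ⟪p, y⟫) x := by
  obtain ⟨x, -, hx⟩ := (isCompact_closedBall x₀ (2 * r)).exists_isMinOn
    (f := fun y => u y + c * ‖y - x₀‖ ^ 2 - ⟪p, y⟫)
    ⟨x₀, Metric.mem_closedBall_self (by positivity)⟩ (by fun_prop)
  have hux : u x + c * ‖x - x₀‖ ^ 2 ≤ u x₀ + c * r * ‖x - x₀‖ := by
    have hle := hx (Metric.mem_closedBall_self (by positivity))
    have hcs : ⟪p, x - x₀⟫ ≤ c * r * ‖x - x₀‖ := (real_inner_le_norm _ _).trans (by gcongr)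
    simp only [Set.mem_ofPred_eq, sub_self, norm_zero] at hle
    rw [inner_sub_right] at hcs
    linarith
  have hdist : ‖x - x₀‖ ≤ r := by
    have hsq : c * ‖x - x₀‖ * ‖x - x₀‖ ≤ c * ‖x - x₀‖ * r := by linarith [hmin x]
    by_contra! h
    exact h.not_ge (le_of_mul_le_mul_left hsq (mul_pos hc (hr.trans h)))
  refine ⟨x, mem_closedBall_iff_norm.2 hdist, ?_, hx.isLocalMin <|
    Metric.closedBall_mem_nhds_of_mem <| mem_ball_iff_norm.2 (by linarith)⟩
  calc u x ≤ u x + c * ‖x - x₀‖ ^ 2 := le_add_of_nonneg_right (by positivity)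
    _ ≤ u x₀ + c * r * ‖x - x₀‖ := hux
    _ ≤ u x₀ + c * r * r := by gcongr
    _ = u x₀ + c * r ^ 2 := by ring

variable [FiniteDimensional ℝ E]

lemma closedBall_subset_image_contactSet (hu : ContDiff ℝ 2 u) (hmin : ∀ y, u x₀ ≤ u y)
    (hc : 0 < c) (hr : 0 < r) :
    Metric.closedBall 0 (c * r) ⊆
      (fun x => ∇ u x + (2 * c) • (x - x₀)) '' contactSet u x₀ c r := by
  intro p hp
  rw [mem_closedBall_zero_iff] at hp
  obtain ⟨x, hx, hux, hlocal⟩ :=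
    exists_isLocalMin_add_mul_norm_sub_sq_sub_inner hu.continuous hmin hc hr hp
  have hcrit : ∇ u x + (2 * c) • (x - x₀) = p := by
    have hzero := congrArg (toDual ℝ E).symm hlocal.fderiv_eq_zero
    rwa [map_zero, ← gradient,
      gradient_add_mul_norm_sub_sq_sub_inner (hu.differentiable two_ne_zero), sub_eq_zero]
      at hzero
  have hgrad : ‖∇ u x‖ ≤ 3 * c * r :=
    calc ‖∇ u x‖ = ‖p - (2 * c) • (x - x₀)‖ := by rw [← hcrit, add_sub_cancel_right]
      _ ≤ ‖p‖ + ‖(2 * c) • (x - x₀)‖ := norm_sub_le _ _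
      _ = ‖p‖ + 2 * c * ‖x - x₀‖ := by rw [norm_smul, Real.norm_of_nonneg (by positivity)]
      _ ≤ c * r + 2 * c * r := by gcongr; exact mem_closedBall_iff_norm.1 hx
      _ = 3 * c * r := by ring
  refine ⟨x, ⟨hx, hux, hgrad, ?_⟩, hcrit⟩
  rw [← hessian_add_mul_norm_sub_sq_sub_inner hu c x₀ p]
  refine isPositive_hessian_of_isLocalMin ?_ hlocal
  exact (hu.add (contDiff_const.mul ((contDiff_id.sub contDiff_const).norm_sq ℝ))).sub
    (innerSL ℝ p).contDiff

theorem measure_closedBall_le_measure_contactSet [MeasurableSpace E] [BorelSpace E]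
    (μ : Measure E) [μ.IsAddHaarMeasure] (hu : ContDiff ℝ 2 u) (hmin : ∀ y, u x₀ ≤ u y)
    (hc : 0 < c) (hr : 0 < r) {T : ℝ}
    (htrace : ∀ x ∈ contactSet u x₀ c r, LinearMap.trace ℝ E (shiftedHessian u c x) ≤ T) :
    μ (Metric.closedBall 0 (c * r)) ≤
      ENNReal.ofReal (T ^ finrank ℝ E) * μ (contactSet u x₀ c r) := by
  have hmeas := (isClosed_contactSet hu x₀ c r).measurableSet
  have hdet : ∀ x ∈ contactSet u x₀ c r, |(shiftedHessian u c x).det| ≤ T ^ finrank ℝ E := by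
    intro x hx
    have hpos := (ContinuousLinearMap.isPositive_toLinearMap_iff _).2 hx.2.2.2
    exact (abs_det_le_trace_pow_finrank hpos).trans
      (pow_le_pow_left₀ hpos.trace_nonneg (htrace x hx) _)
  calc μ (Metric.closedBall 0 (c * r))
      ≤ μ ((fun x => ∇ u x + (2 * c) • (x - x₀)) '' contactSet u x₀ c r) :=
        measure_mono (closedBall_subset_image_contactSet hu hmin hc hr)
    _ ≤ ∫⁻ x in contactSet u x₀ c r, ENNReal.ofReal |(shiftedHessian u c x).det| ∂μ :=
        addHaar_image_le_lintegral_abs_det_fderiv μ hmeas fun x _ =>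
          (hasFDerivAt_gradient_add_smul_sub hu c x₀ x).hasFDerivWithinAt
    _ ≤ ∫⁻ _ in contactSet u x₀ c r, ENNReal.ofReal (T ^ finrank ℝ E) ∂μ :=
        setLIntegral_mono' hmeas fun x hx => ENNReal.ofReal_le_ofReal (hdet x hx)
    _ = ENNReal.ofReal (T ^ finrank ℝ E) * μ (contactSet u x₀ c r) := setLIntegral_const _ _

end ContactSet

section KodairaThurston

variable {θ : ℝ} {u : EuclideanSpace ℝ (Fin 3) → ℝ}

/-- The orthonormal frame along which `Xd θ`, `Yd θ` and `pd 2` differentiate. -/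
noncomputable def rotatedFrame (θ : ℝ) : Fin 3 → EuclideanSpace ℝ (Fin 3) :=
  ![!₂[Real.cos θ, -Real.sin θ, 0], !₂[Real.sin θ, Real.cos θ, 0], !₂[0, 0, 1]]

lemma orthonormal_rotatedFrame (θ : ℝ) : Orthonormal ℝ (rotatedFrame θ) := by
  rw [orthonormal_iff_ite]
  intro i j
  fin_cases i <;> fin_cases j <;>
    simp [rotatedFrame, EuclideanSpace.norm_eq, PiLp.inner_apply, Fin.sum_univ_three, mul_comm]

lemma Xd_eq_fderiv (θ : ℝ) (u : EuclideanSpace ℝ (Fin 3) → ℝ) :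
    Xd θ u = fun x => fderiv ℝ u x (rotatedFrame θ 0) := by
  have hvec : rotatedFrame θ 0 = Real.cos θ • EuclideanSpace.single 0 1 -
      Real.sin θ • EuclideanSpace.single 1 1 := by
    ext i; fin_cases i <;> simp [rotatedFrame]
  funext x
  simp only [hvec, map_sub, map_smul, smul_eq_mul, Xd, pd]

lemma Yd_eq_fderiv (θ : ℝ) (u : EuclideanSpace ℝ (Fin 3) → ℝ) :
    Yd θ u = fun x => fderiv ℝ u x (rotatedFrame θ 1) := by
  have hvec : rotatedFrame θ 1 = Real.sin θ • EuclideanSpace.single 0 1 +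
      Real.cos θ • EuclideanSpace.single 1 1 := by
    ext i; fin_cases i <;> simp [rotatedFrame]
  funext x
  simp only [hvec, map_add, map_smul, smul_eq_mul, Yd, pd]

lemma pd_two_eq_fderiv (θ : ℝ) (u : EuclideanSpace ℝ (Fin 3) → ℝ) :
    pd 2 u = fun x => fderiv ℝ u x (rotatedFrame θ 2) := by
  have hvec : rotatedFrame θ 2 = EuclideanSpace.single 2 1 := by
    ext i; fin_cases i <;> simp [rotatedFrame]
  funext x
  rw [hvec, pd]

/-- The left-hand side of the reduced Calabi–Yau equation
`(u_XX + 1)(u_YY + u_tt + u_t + 1) - u_XY² - u_Xt² = e ^ F`. -/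
noncomputable def reducedCalabiYauOp (θ : ℝ) (u : EuclideanSpace ℝ (Fin 3) → ℝ) :
    EuclideanSpace ℝ (Fin 3) → ℝ :=
  fun x => (Xd θ (Xd θ u) x + 1) * (Yd θ (Yd θ u) x + pd 2 (pd 2 u) x + pd 2 u x + 1) -
    Yd θ (Xd θ u) x ^ 2 - pd 2 (Xd θ u) x ^ 2

lemma reducedCalabiYauOp_eq_inner_hessian (θ : ℝ) (hu : ContDiff ℝ 2 u)
    (x : EuclideanSpace ℝ (Fin 3)) :
    reducedCalabiYauOp θ u x =
      (⟪hessian u x (rotatedFrame θ 0), rotatedFrame θ 0⟫ + 1) *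
        (⟪hessian u x (rotatedFrame θ 1), rotatedFrame θ 1⟫ +
          ⟪hessian u x (rotatedFrame θ 2), rotatedFrame θ 2⟫ + pd 2 u x + 1) -
      ⟪hessian u x (rotatedFrame θ 1), rotatedFrame θ 0⟫ ^ 2 -
      ⟪hessian u x (rotatedFrame θ 2), rotatedFrame θ 0⟫ ^ 2 := by
  simp only [reducedCalabiYauOp, inner_hessian_left hu, Xd_eq_fderiv, Yd_eq_fderiv,
    pd_two_eq_fderiv θ]

lemma trace_eq_sum_inner_rotatedFrame (θ : ℝ)
    (A : EuclideanSpace ℝ (Fin 3) →ₗ[ℝ] EuclideanSpace ℝ (Fin 3)) :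
    A.trace ℝ _ = ∑ i, ⟪A (rotatedFrame θ i), rotatedFrame θ i⟫ := by
  have hspan : ⊤ ≤ Submodule.span ℝ (Set.range (rotatedFrame θ)) :=
    ((orthonormal_rotatedFrame θ).linearIndependent.span_eq_top_of_card_eq_finrank (by simp)).ge
  simpa [real_inner_comm] using
    A.trace_eq_sum_inner (OrthonormalBasis.mk (orthonormal_rotatedFrame θ) hspan)

lemma add_add_le_two_mul_of_mul_sub_sq_le {a b h p q s t M : ℝ} (ha : 0 ≤ a) (hb : 0 ≤ b)
    (hh : 0 ≤ h) (hp : p ^ 2 ≤ b * a) (hq : q ^ 2 ≤ h * a) (hs : 1 / 2 ≤ s) (ht : 1 / 2 ≤ t)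
    (hM : (a + s) * (b + h + t) - p ^ 2 - q ^ 2 ≤ M) : a + b + h ≤ 2 * M := by
  have hlower : 1 / 2 * a + 1 / 2 * (b + h) ≤ M :=
    calc 1 / 2 * a + 1 / 2 * (b + h) ≤ t * a + s * (b + h) := by gcongr
      _ ≤ t * a + s * (b + h) + s * t := le_add_of_nonneg_right (by positivity)
      _ ≤ (a + s) * (b + h + t) - p ^ 2 - q ^ 2 := by linarith
      _ ≤ M := hM
  linarith

lemma abs_pd_le_norm_gradient (i : Fin 3) (u : EuclideanSpace ℝ (Fin 3) → ℝ)
    (x : EuclideanSpace ℝ (Fin 3)) : |pd i u x| ≤ ‖∇ u x‖ := by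
  rw [pd, ← inner_gradient_left]
  simpa using abs_real_inner_le_norm (∇ u x) (EuclideanSpace.single i 1)

lemma trace_shiftedHessian_le {c M : ℝ} {x : EuclideanSpace ℝ (Fin 3)} (hu : ContDiff ℝ 2 u)
    (hc : c ≤ 1 / 4) (ht : 4 * c - 1 / 2 ≤ pd 2 u x) (hpos : (shiftedHessian u c x).IsPositive)
    (hop : reducedCalabiYauOp θ u x ≤ M) :
    LinearMap.trace ℝ (EuclideanSpace ℝ (Fin 3)) (shiftedHessian u c x) ≤ 2 * M := by
  set A := shiftedHessian u c x with hA
  have hentry (i j : Fin 3) : ⟪hessian u x (rotatedFrame θ i), rotatedFrame θ j⟫ =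
      ⟪A (rotatedFrame θ i), rotatedFrame θ j⟫ - if i = j then 2 * c else 0 := by
    simp [hA, shiftedHessian, inner_add_left, real_inner_smul_left,
      orthonormal_iff_ite.1 (orthonormal_rotatedFrame θ) i j]
  rw [reducedCalabiYauOp_eq_inner_hessian θ hu] at hop
  simp only [hentry, Fin.isValue, reduceIte, Fin.reduceEq] at hop
  rw [trace_eq_sum_inner_rotatedFrame θ, Fin.sum_univ_three]
  -- `2c` on the diagonal turns the summands `1` and `1 + u_t` of the two factors into `s` and `t`.
  refine add_add_le_two_mul_of_mul_sub_sq_le (hpos.inner_nonneg_left _)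
    (hpos.inner_nonneg_left _) (hpos.inner_nonneg_left _) (inner_sq_le_of_isPositive hpos _ _)
    (inner_sq_le_of_isPositive hpos _ _) (s := 1 - 2 * c) (t := 1 + pd 2 u x - 4 * c)
    (by linarith) (by linarith) (hop.trans' (le_of_eq ?_))
  simp only [ContinuousLinearMap.coe_coe]
  ring

lemma volume_closedBall_le_volume_contactSet {x₀ : EuclideanSpace ℝ (Fin 3)} {c r M : ℝ}
    (hu : ContDiff ℝ 2 u) (hmin : ∀ y, u x₀ ≤ u y) (hc : 0 < c) (hr : 0 < r)
    (hcr : 4 * c + 3 * c * r ≤ 1 / 2) (hop : ∀ x, reducedCalabiYauOp θ u x ≤ M) :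
    volume (Metric.closedBall (0 : EuclideanSpace ℝ (Fin 3)) (c * r)) ≤
      ENNReal.ofReal ((2 * M) ^ 3) * volume (contactSet u x₀ c r) := by
  have hcr_pos : 0 < c * r := mul_pos hc hr
  have habp := measure_closedBall_le_measure_contactSet volume hu hmin hc hr (T := 2 * M) ?_
  · rwa [finrank_euclideanSpace_fin] at habp
  refine fun x ⟨_, _, hgrad, hpos⟩ =>
    trace_shiftedHessian_le hu (by linarith) ?_ hpos (hop x)
  linarith [neg_le_of_abs_le ((abs_pd_le_norm_gradient 2 u x).trans hgrad)]

end KodairaThurston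

theorem sublevel_measure_lower_bound_kodaira_thurston_general {θ M ε : ℝ}
    {u : EuclideanSpace ℝ (Fin 3) → ℝ} (hM : 0 < M) (hε : 0 < ε) (hε_le : ε ≤ 1)
    (hu : ContDiff ℝ 2 u) (hper : IsIntegerPeriodic u)
    (hop : ∀ x, reducedCalabiYauOp θ u x ≤ M) :
    ENNReal.ofReal (4 / 3 * Real.pi * (ε / (128 * M)) ^ 3) ≤
      volume {x : EuclideanSpace ℝ (Fin 3) |
        (∀ i, 0 ≤ x i ∧ x i < 1) ∧ u x ≤ (⨅ y, u y) + ε} := by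
  obtain ⟨x₀, hmin⟩ := hper.exists_forall_le hu.continuous
  have hcontact : contactSet u x₀ (ε / 16) (1 / 4) ⊆
      Metric.closedBall x₀ (1 / 4) ∩ {x | u x ≤ (⨅ y, u y) + ε} := by
    rintro x ⟨hball, hux, -⟩
    exact ⟨hball, hux.trans (add_le_add (le_ciInf hmin) (by linarith))⟩
  have habp : volume (Metric.closedBall (0 : EuclideanSpace ℝ (Fin 3)) (ε / 16 * (1 / 4))) ≤
      ENNReal.ofReal ((2 * M) ^ 3) * volume (contactSet u x₀ (ε / 16) (1 / 4)) :=
    volume_closedBall_le_volume_contactSet hu hmin (by positivity) (by norm_num) (by linarith) hop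
  calc ENNReal.ofReal (4 / 3 * Real.pi * (ε / (128 * M)) ^ 3)
      = volume (Metric.closedBall (0 : EuclideanSpace ℝ (Fin 3)) (ε / 16 * (1 / 4))) /
          ENNReal.ofReal ((2 * M) ^ 3) := by
        rw [EuclideanSpace.volume_closedBall_fin_three, ← ENNReal.ofReal_pow (by positivity),
          ← ENNReal.ofReal_mul (by positivity), ← ENNReal.ofReal_div_of_pos (by positivity)]
        congr 1
        field_simp
        ring
    _ ≤ volume (contactSet u x₀ (ε / 16) (1 / 4)) := ENNReal.div_le_of_le_mul' habp
    _ ≤ volume (Metric.closedBall x₀ (1 / 4) ∩ {x | u x ≤ (⨅ y, u y) + ε}) :=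
        measure_mono hcontact
    _ ≤ volume {x : EuclideanSpace ℝ (Fin 3) |
          (∀ i, 0 ≤ x i ∧ x i < 1) ∧ u x ≤ (⨅ y, u y) + ε} :=
        hper.volume_closedBall_inter_sublevel_le hu.continuous.measurable x₀ (by norm_num) _

/-- The measure lower bound (2.3) for solutions of the reduced Calabi–Yau equation on `T³`:
for every `θ` and smooth `ℤ³`-periodic `F` there is `δ > 0` such that for every smooth
`ℤ³`-periodic solution `u` with `sup u = 0`, the set `{x ∈ [0,1)³ : u(x) ≤ inf u + 1}` has
Lebesgue measure at least `δ`. -/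
theorem sublevel_measure_lower_bound_kodaira_thurston (θ : ℝ)
    (F : EuclideanSpace ℝ (Fin 3) → ℝ) (hF : ContDiff ℝ (⊤ : ℕ∞) F)
    (hFper : ∀ (x a : EuclideanSpace ℝ (Fin 3)), (∀ i, ∃ k : ℤ, a i = (k : ℝ)) →
      F (x + a) = F x) :
    ∃ δ : ℝ, 0 < δ ∧
      ∀ u : EuclideanSpace ℝ (Fin 3) → ℝ,
        ContDiff ℝ (⊤ : ℕ∞) u →
        (∀ (x a : EuclideanSpace ℝ (Fin 3)), (∀ i, ∃ k : ℤ, a i = (k : ℝ)) →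
          u (x + a) = u x) →
        (⨆ x, u x) = 0 →
        (∀ x, (Xd θ (Xd θ u) x + 1) *
              (Yd θ (Yd θ u) x + pd 2 (pd 2 u) x + pd 2 u x + 1) -
            (Yd θ (Xd θ u) x) ^ 2 - (pd 2 (Xd θ u) x) ^ 2 = Real.exp (F x)) →
        (∀ x, 0 < Xd θ (Xd θ u) x + 1) →
        (∀ x, 0 < Yd θ (Yd θ u) x + pd 2 (pd 2 u) x + pd 2 u x + 1) →
        ENNReal.ofReal δ ≤
          volume {x : EuclideanSpace ℝ (Fin 3) |
            (∀ i, 0 ≤ x i ∧ x i < 1) ∧ u x ≤ (⨅ y, u y) + 1} := by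
  have hFper_neg : IsIntegerPeriodic (-F) := fun x a ha => congrArg Neg.neg (hFper x a ha)
  obtain ⟨z, hz⟩ := hFper_neg.exists_forall_le hF.continuous.neg
  refine ⟨4 / 3 * Real.pi * (1 / (128 * Real.exp (F z))) ^ 3, by positivity,
    fun u hu hper _ heq _ _ => ?_⟩
  exact sublevel_measure_lower_bound_kodaira_thurston_general (Real.exp_pos _) one_pos le_rfl
    (contDiff_infty.1 hu 2) hper
    fun x => (heq x).trans_le (Real.exp_le_exp.2 (neg_le_neg_iff.1 (hz x)))
end
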